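/- Let γ^1,…,γ^6 be a Clifford family of N×N complex matrices in dimension 6, let z = (1/2)·Σ_{a=1}^6 γ^a ⊗ γ^a, and let W := γ^1 γ^2 γ^3 γ^4 γ^5 γ^6 (so W² = −1). Then W ⊗ W = (4/45)·(z⁶ − (25/2)·z⁴ + 34·z² − 45/4); in particular (1/2)(1 + W⊗W) is the spectral projector of z onto the odd eigenvalues ±1, ±3 and (1/2)(1 − W⊗W) is the spectral projector onto the even eigenvalues 0, ±2. -/

import Mathlib

open Kronecker

/-!
The elements `γ a ⊗ γ a` are commuting involutions whose ordered product is `W ⊗ W`. On a joint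
eigenspace where `m` of them are `-1`, `z` acts as `3 - m` and `W ⊗ W` as `(-1) ^ m`, so a relation
`f(z) + (W ⊗ W) g(z) = 0` only has to be checked at the seven pairs `(3 - m, (-1) ^ m)`. No
diagonalisation is needed: splitting off one involution `x` at a time, the factor `1 ± x` moves
past the relation while replacing `x` by `±1`, and `(1 + x) + (1 - x) = 2` recovers the whole.
-/

section CommutingInvolutions

open Polynomial

variable {K A : Type*}

section Semiring

variable [CommSemiring K] [Semiring A] [Algebra K A]

theorem semiconjBy_aeval {e u v : A} (h : SemiconjBy e u v) (f : K[X]) :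
    SemiconjBy e (aeval u f) (aeval v f) := by
  induction f using Polynomial.induction_on' with
  | add p q hp hq => simpa only [map_add] using hp.add_right hq
  | monomial k r =>
    simpa only [aeval_monomial] using
      SemiconjBy.mul_right (Algebra.commute_algebraMap_right r e) (h.pow_right k)

theorem aeval_add_algebraMap (t : A) (c : K) (f : K[X]) :
    aeval (t + algebraMap K A c) f = aeval t (taylor c f) := by
  rw [taylor_apply, aeval_comp, map_add, aeval_X, aeval_C]

theorem semiconjBy_aeval_involution {x t : A} (hx : x * x = 1) (hxt : Commute x t) (c : K)
    (f : K[X]) : SemiconjBy (1 + x) (aeval (c • x + t) f) (aeval t (taylor c f)) := by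
  rw [← aeval_add_algebraMap]
  refine semiconjBy_aeval ?_ f
  rw [SemiconjBy, Algebra.algebraMap_eq_smul_one]
  simp only [add_mul, mul_add, one_mul, mul_one, smul_mul_assoc, mul_smul_comm, hx, hxt.eq]
  module

theorem one_add_mul_aeval_eq_zero {x t p : A} (hx : x * x = 1) (hxt : Commute x t)
    (hxp : Commute x p) (c : K) (f g : K[X])
    (h : aeval t (taylor c f) + p * aeval t (taylor c g) = 0) :
    (1 + x) * (aeval (c • x + t) f + x * p * aeval (c • x + t) g) = 0 := by
  have hxp' : SemiconjBy (1 + x) (x * p) p := by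
    rw [SemiconjBy, add_mul, ← mul_assoc x x p, hx, mul_add, hxp.eq]
    simp only [one_mul, mul_one, add_comm]
  rw [((semiconjBy_aeval_involution hx hxt c f).add_right
    (hxp'.mul_right (semiconjBy_aeval_involution hx hxt c g))).eq, h, zero_mul]

end Semiring

variable [CommRing K] [Ring A] [Algebra K A]

theorem aeval_smul_sum_add_prod_mul_aeval_eq_zero (h2 : IsSMulRegular A (2 : K)) (c : K)
    {l : List A} (hsq : ∀ x ∈ l, x * x = 1) (hcomm : l.Pairwise Commute) (f g : K[X])
    (h : ∀ m ≤ l.length, f.eval (c * (l.length - 2 * m)) +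
      (-1) ^ m * g.eval (c * (l.length - 2 * m)) = 0) :
    aeval (c • l.sum) f + l.prod * aeval (c • l.sum) g = 0 := by
  induction l generalizing f g with
  | nil =>
    have h0 : f.coeff 0 + g.coeff 0 = 0 := by simpa [coeff_zero_eq_eval_zero] using h 0 le_rfl
    simpa [aeval_def, eval₂_at_zero, ← map_add] using congrArg (algebraMap K A) h0
  | cons x l ih =>
    obtain ⟨hx, hl⟩ := List.forall_mem_cons.mp hsq
    obtain ⟨hxl, hcl⟩ := List.pairwise_cons.mp hcomm
    have hxs : Commute x (c • l.sum) := (Commute.list_sum_right x l hxl).smul_right c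
    have hxp : Commute x l.prod := Commute.list_prod_right l x hxl
    rw [List.sum_cons, List.prod_cons, smul_add]
    set y := aeval (c • x + c • l.sum) f + x * l.prod * aeval (c • x + c • l.sum) g with hy
    have hplus : (1 + x) * y = 0 := by
      refine one_add_mul_aeval_eq_zero hx hxs hxp c f g (ih hl hcl _ _ fun m hm => ?_)
      have heig : c * ((x :: l).length - 2 * m) = c * (l.length - 2 * m) + c := by
        rw [List.length_cons]; push_cast; ring
      simpa only [taylor_eval, heig] using h m (Nat.le_succ_of_le hm)
    have hminus : (1 - x) * y = 0 := by
      have hy' : y = aeval (-c • -x + c • l.sum) f +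
          -x * l.prod * aeval (-c • -x + c • l.sum) (-g) := by
        rw [hy, neg_smul_neg, map_neg, neg_mul, neg_mul_neg]
      rw [hy', sub_eq_add_neg]
      refine one_add_mul_aeval_eq_zero (by rw [neg_mul_neg, hx]) hxs.neg_left hxp.neg_left (-c)
        f (-g) (ih hl hcl _ _ fun m hm => ?_)
      have heig : c * ((x :: l).length - 2 * (m + 1 : ℕ)) = c * (l.length - 2 * m) + -c := by
        rw [List.length_cons]; push_cast; ring
      simpa only [taylor_eval, heig, map_neg, eval_neg, pow_succ, mul_neg, mul_one, neg_mul]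
        using h (m + 1) (Nat.succ_le_succ hm)
    refine h2 ?_
    calc (2 : K) • y = (1 + x) * y + (1 - x) * y := by rw [two_smul]; noncomm_ring
      _ = (2 : K) • (0 : A) := by rw [hplus, hminus, add_zero, smul_zero]

end CommutingInvolutions

/-- A Clifford family in a `K`-algebra: generators with `γ a γ b + γ b γ a = 2 δ_{ab}`, whose
ordered product is the chirality element. The `2` is a scalar of `K`; as `γ` does not determine
`K`, it is an explicit argument. -/
def IsCliffordFamily (K : Type*) {ι A : Type*} [DecidableEq ι] [CommSemiring K] [Semiring A]
    [Algebra K A] (γ : ι → A) : Prop :=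
  ∀ a b, γ a * γ b + γ b * γ a = if a = b then (2 : K) • (1 : A) else 0

theorem commute_kronecker_of_anticommute {K m n : Type*} [CommRing K] [Fintype m] [Fintype n]
    {A A' : Matrix m m K} {B B' : Matrix n n K} (hA : A * A' = -(A' * A))
    (hB : B * B' = -(B' * B)) : Commute (A ⊗ₖ B) (A' ⊗ₖ B') := by
  rw [Commute, SemiconjBy, ← Matrix.mul_kronecker_mul, ← Matrix.mul_kronecker_mul, hA, hB]
  ext
  simp only [Matrix.kroneckerMap_apply, Matrix.neg_apply, neg_mul_neg]

theorem prod_ofFn_kronecker {K m n : Type*} [CommSemiring K] [Fintype m] [DecidableEq m]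
    [Fintype n] [DecidableEq n] {d : ℕ} (γ : Fin d → Matrix m m K) (δ : Fin d → Matrix n n K) :
    (List.ofFn fun a => γ a ⊗ₖ δ a).prod = (List.ofFn γ).prod ⊗ₖ (List.ofFn δ).prod := by
  induction d with
  | zero => simp only [List.ofFn_zero, List.prod_nil, Matrix.one_kronecker_one]
  | succ d ih => simp only [List.ofFn_succ, List.prod_cons, ih, Matrix.mul_kronecker_mul]

namespace IsCliffordFamily

section Algebra

variable {K ι A : Type*} [DecidableEq ι] [CommSemiring K] {γ : ι → A}

theorem mul_self [Semiring A] [Algebra K A] (hγ : IsCliffordFamily K γ)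
    (h2 : IsSMulRegular A (2 : K)) (a : ι) : γ a * γ a = 1 :=
  h2 (by simpa only [← two_smul K, reduceIte] using hγ a a)

theorem anticommute [Ring A] [Algebra K A] (hγ : IsCliffordFamily K γ) {a b : ι} (hab : a ≠ b) :
    γ a * γ b = -(γ b * γ a) :=
  eq_neg_of_add_eq_zero_left ((hγ a b).trans (if_neg hab))

end Algebra

open Polynomial in
theorem aeval_sum_kronecker_add_prod_mul_aeval_eq_zero {K m n : Type*} [CommRing K] [Fintype m]
    [DecidableEq m] [Fintype n] [DecidableEq n] (h2 : IsSMulRegular K (2 : K)) {d : ℕ}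
    {γ : Fin d → Matrix m m K} {δ : Fin d → Matrix n n K} (hγ : IsCliffordFamily K γ)
    (hδ : IsCliffordFamily K δ) (c : K) (f g : K[X])
    (h : ∀ k ≤ d, f.eval (c * (d - 2 * k)) + (-1) ^ k * g.eval (c * (d - 2 * k)) = 0) :
    aeval (c • ∑ a, γ a ⊗ₖ δ a) f +
      (List.ofFn γ).prod ⊗ₖ (List.ofFn δ).prod * aeval (c • ∑ a, γ a ⊗ₖ δ a) g = 0 := by
  rw [← List.sum_ofFn, ← prod_ofFn_kronecker]
  refine aeval_smul_sum_add_prod_mul_aeval_eq_zero h2.matrix c ?_ ?_ f g ?_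
  · refine (List.forall_mem_ofFn_iff (P := fun x => x * x = 1)).mpr fun a => ?_
    rw [← Matrix.mul_kronecker_mul, hγ.mul_self h2.matrix, hδ.mul_self h2.matrix,
      Matrix.one_kronecker_one]
  · exact List.pairwise_ofFn.mpr fun a b hab =>
      commute_kronecker_of_anticommute (hγ.anticommute hab.ne) (hδ.anticommute hab.ne)
  · simpa only [List.length_ofFn] using h

section DimensionSix

open Polynomial

variable {K m n : Type*} [Field K] [Fintype m] [DecidableEq m] [Fintype n] [DecidableEq n]
  {γ : Fin 6 → Matrix m m K} {δ : Fin 6 → Matrix n n K} {z : Matrix (m × n) (m × n) K}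

theorem aeval_half_sum_kronecker_add_prod_mul_aeval_eq_zero (hγ : IsCliffordFamily K γ)
    (hδ : IsCliffordFamily K δ) (h2 : (2 : K) ≠ 0) (hz : z = (1 / 2 : K) • ∑ a, γ a ⊗ₖ δ a)
    (f g : K[X]) (h : ∀ k : ℕ, k ≤ 6 → f.eval (3 - k : K) + (-1) ^ k * g.eval (3 - k : K) = 0) :
    aeval z f + (List.ofFn γ).prod ⊗ₖ (List.ofFn δ).prod * aeval z g = 0 := by
  have heig (k : ℕ) : (1 / 2 : K) * ((6 : ℕ) - 2 * k) = 3 - k := by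
    push_cast
    field_simp
    ring
  rw [hz]
  refine hγ.aeval_sum_kronecker_add_prod_mul_aeval_eq_zero (IsRegular.of_ne_zero h2).left hδ
    _ f g fun k hk => ?_
  simpa only [heig] using h k hk

theorem prod_kronecker_prod_eq (hγ : IsCliffordFamily K γ) (hδ : IsCliffordFamily K δ)
    (h2 : (2 : K) ≠ 0) (h45 : (45 : K) ≠ 0) (hz : z = (1 / 2 : K) • ∑ a, γ a ⊗ₖ δ a) :
    (List.ofFn γ).prod ⊗ₖ (List.ofFn δ).prod = (4 / 45 : K) •
      (z ^ 6 - (25 / 2 : K) • z ^ 4 + (34 : K) • z ^ 2 - (45 / 4 : K) • 1) := by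
  have h4 : (4 : K) ≠ 0 := by simpa only [show (4 : K) = 2 * 2 by norm_num] using mul_ne_zero h2 h2
  have hrel := hγ.aeval_half_sum_kronecker_add_prod_mul_aeval_eq_zero hδ h2 hz
    ((4 / 45 : K) • (X ^ 6 - (25 / 2 : K) • X ^ 4 + (34 : K) • X ^ 2 - (45 / 4 : K) • 1)) (-1)
    fun k hk => by
      simp only [eval_smul, eval_add, eval_sub, eval_neg, eval_pow, eval_X, eval_one, smul_eq_mul]
      interval_cases k <;> push_cast <;> field_simp <;> ring
  simp only [map_neg, map_add, map_sub, map_smul, map_pow, map_one, aeval_X, mul_neg, mul_one]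
    at hrel
  exact (add_neg_eq_zero.mp hrel).symm

theorem one_add_prod_kronecker_prod_mul_eq_zero (hγ : IsCliffordFamily K γ)
    (hδ : IsCliffordFamily K δ) (h2 : (2 : K) ≠ 0) (hz : z = (1 / 2 : K) • ∑ a, γ a ⊗ₖ δ a) :
    (1 + (List.ofFn γ).prod ⊗ₖ (List.ofFn δ).prod) *
      ((z ^ 2 - 1) * (z ^ 2 - (9 : K) • 1)) = 0 := by
  have hrel := hγ.aeval_half_sum_kronecker_add_prod_mul_aeval_eq_zero hδ h2 hz
    ((X ^ 2 - 1) * (X ^ 2 - (9 : K) • 1)) ((X ^ 2 - 1) * (X ^ 2 - (9 : K) • 1)) fun k hk => by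
      simp only [eval_smul, eval_mul, eval_sub, eval_pow, eval_X, eval_one, smul_eq_mul]
      interval_cases k <;> push_cast <;> ring
  simpa only [map_mul, map_sub, map_smul, map_pow, map_one, aeval_X, one_add_mul] using hrel

theorem one_sub_prod_kronecker_prod_mul_eq_zero (hγ : IsCliffordFamily K γ)
    (hδ : IsCliffordFamily K δ) (h2 : (2 : K) ≠ 0) (hz : z = (1 / 2 : K) • ∑ a, γ a ⊗ₖ δ a) :
    (1 - (List.ofFn γ).prod ⊗ₖ (List.ofFn δ).prod) * (z * (z ^ 2 - (4 : K) • 1)) = 0 := by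
  have hrel := hγ.aeval_half_sum_kronecker_add_prod_mul_aeval_eq_zero hδ h2 hz
    (X * (X ^ 2 - (4 : K) • 1)) (-(X * (X ^ 2 - (4 : K) • 1))) fun k hk => by
      simp only [eval_smul, eval_mul, eval_sub, eval_neg, eval_pow, eval_X, eval_one, smul_eq_mul]
      interval_cases k <;> push_cast <;> ring
  simpa only [map_neg, map_mul, map_sub, map_smul, map_pow, map_one, aeval_X, mul_neg,
    ← sub_eq_add_neg, ← one_sub_mul] using hrel

end DimensionSix

end IsCliffordFamily

theorem prod_ofFn_six {M : Type*} [Monoid M] (x : Fin 6 → M) :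
    (List.ofFn x).prod = x 0 * x 1 * x 2 * x 3 * x 4 * x 5 := by
  simp [List.ofFn_succ, mul_assoc, Fin.succ]

theorem so6_chirality_tensor_general {K m n : Type*} [Field K] [Fintype m] [DecidableEq m]
    [Fintype n] [DecidableEq n] (h2 : (2 : K) ≠ 0) (h45 : (45 : K) ≠ 0)
    {γ : Fin 6 → Matrix m m K} {δ : Fin 6 → Matrix n n K} (hγ : IsCliffordFamily K γ)
    (hδ : IsCliffordFamily K δ) {z : Matrix (m × n) (m × n) K}
    (hz : z = (1 / 2 : K) • ∑ a, γ a ⊗ₖ δ a) {V : Matrix m m K} {W : Matrix n n K}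
    (hV : V = γ 0 * γ 1 * γ 2 * γ 3 * γ 4 * γ 5) (hW : W = δ 0 * δ 1 * δ 2 * δ 3 * δ 4 * δ 5) :
    V ⊗ₖ W = (4 / 45 : K) •
      (z ^ 6 - (25 / 2 : K) • z ^ 4 + (34 : K) • z ^ 2 - (45 / 4 : K) • 1) ∧
    ((1 / 2 : K) • (1 + V ⊗ₖ W)) * ((z ^ 2 - 1) * (z ^ 2 - (9 : K) • 1)) = 0 ∧
    ((1 / 2 : K) • (1 - V ⊗ₖ W)) * (z * (z ^ 2 - (4 : K) • 1)) = 0 := by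
  rw [← prod_ofFn_six] at hV hW
  subst hV hW
  refine ⟨hγ.prod_kronecker_prod_eq hδ h2 h45 hz, ?_, ?_⟩
  · rw [smul_mul_assoc, hγ.one_add_prod_kronecker_prod_mul_eq_zero hδ h2 hz, smul_zero]
  · rw [smul_mul_assoc, hγ.one_sub_prod_kronecker_prod_mul_eq_zero hδ h2 hz, smul_zero]

/-- For a Clifford family `γ^1,…,γ^6` in dimension 6, `z = (1/2)·Σ_a γ^a ⊗ γ^a` and
`W = γ^1γ^2γ^3γ^4γ^5γ^6`, one has
`W⊗W = (4/45)(z⁶ − (25/2)z⁴ + 34z² − 45/4)`; in particular `(1/2)(1 + W⊗W)` is supported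
on the odd eigenvalues ±1, ±3 of `z` (it is annihilated by `(z²−1)(z²−9)`) and
`(1/2)(1 − W⊗W)` is supported on the even eigenvalues 0, ±2 (it is annihilated by
`z(z²−4)`). -/
theorem so6_chirality_tensor {N : ℕ}
    (γ : Fin 6 → Matrix (Fin N) (Fin N) ℂ)
    (hγ : ∀ a b, γ a * γ b + γ b * γ a =
      if a = b then (2 : ℂ) • (1 : Matrix (Fin N) (Fin N) ℂ) else 0)
    (z : Matrix (Fin N × Fin N) (Fin N × Fin N) ℂ)
    (hz : z = (1/2 : ℂ) • ∑ a, γ a ⊗ₖ γ a)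
    (W : Matrix (Fin N) (Fin N) ℂ)
    (hW : W = γ 0 * γ 1 * γ 2 * γ 3 * γ 4 * γ 5) :
    W ⊗ₖ W = (4/45 : ℂ) • (z ^ 6 - (25/2 : ℂ) • z ^ 4 + (34 : ℂ) • z ^ 2 -
        (45/4 : ℂ) • (1 : Matrix (Fin N × Fin N) (Fin N × Fin N) ℂ)) ∧
    ((1/2 : ℂ) • ((1 : Matrix (Fin N × Fin N) (Fin N × Fin N) ℂ) + W ⊗ₖ W)) *
      ((z ^ 2 - (1 : Matrix (Fin N × Fin N) (Fin N × Fin N) ℂ)) *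
        (z ^ 2 - (9 : ℂ) • (1 : Matrix (Fin N × Fin N) (Fin N × Fin N) ℂ))) = 0 ∧
    ((1/2 : ℂ) • ((1 : Matrix (Fin N × Fin N) (Fin N × Fin N) ℂ) - W ⊗ₖ W)) *
      (z * (z ^ 2 - (4 : ℂ) • (1 : Matrix (Fin N × Fin N) (Fin N × Fin N) ℂ))) = 0 := by
  exact so6_chirality_tensor_general two_ne_zero (by norm_num) hγ hγ hz hW hW
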